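/- Let P(X) ∈ (F_q[T])[X] be an irreducible polynomial of degree n ≥ 2 and inseparable degree f. Then for any two distinct roots α, β of P(X) in the algebraic closure of F_q(T), one has |α − β| ≥ H(P)^{−n/f² + 1/f}. -/

import Mathlib

open Polynomial Filter
open scoped ENNReal

noncomputable section

namespace Ooto

variable (Fq : Type) [Field Fq] [Fintype Fq]

/-- `F_q((T⁻¹))`, realized as formal Laurent series in the variable `X = T⁻¹`. -/
abbrev K := LaurentSeries Fq

/-- The element `T = X⁻¹` of `F_q((T⁻¹))`. -/
def TT : K Fq := HahnSeries.single (-1 : ℤ) (1 : Fq)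

/-- The natural embedding of `F_q[T]` into `F_q((T⁻¹))`, sending `T` to `T`. -/
def polyToK : Polynomial Fq →+* K Fq := Polynomial.eval₂RingHom HahnSeries.C (TT Fq)

open Classical in
/-- The absolute value on `F_q((T⁻¹))`: `|0| = 0` and `|ξ| = q^{-N}` where `N` is the order
of `ξ` as a series in `T⁻¹`. -/
def kabs (f : K Fq) : ℝ := if f = 0 then 0 else (Fintype.card Fq : ℝ) ^ (-f.order)

/-- A fixed algebraic closure of `F_q((T⁻¹))`. -/
abbrev L := AlgebraicClosure (K Fq)

def toL : K Fq →+* L Fq := algebraMap (K Fq) (L Fq)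

def φ : Polynomial Fq →+* L Fq := (toL Fq).comp (polyToK Fq)

/-- Evaluation of `P ∈ (F_q[T])[X]` at `ξ ∈ F_q((T⁻¹))`. -/
def evalK (P : Polynomial (Polynomial Fq)) (ξ : K Fq) : K Fq :=
  Polynomial.eval₂ (polyToK Fq) ξ P

/-- Evaluation of `P ∈ (F_q[T])[X]` at a point of the algebraic closure. -/
def evalL (P : Polynomial (Polynomial Fq)) (α : L Fq) : L Fq :=
  Polynomial.eval₂ (φ Fq) α P

/-- Height of a polynomial over `F_q[T]`: the maximum of the absolute values of its
coefficients. -/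
def Hpoly (P : Polynomial (Polynomial Fq)) : ℝ := ⨆ i : ℕ, kabs Fq (polyToK Fq (P.coeff i))

/-- `P` is the minimal polynomial of `α`: a non-constant irreducible primitive polynomial in
`(F_q[T])[X]` whose leading coefficient is monic in `T`, vanishing at `α`. -/
def IsMinPolyOf (P : Polynomial (Polynomial Fq)) (α : L Fq) : Prop :=
  0 < P.natDegree ∧ Irreducible P ∧ P.IsPrimitive ∧ (P.leadingCoeff).Monic ∧ evalL Fq P α = 0

/-- `α` is algebraic over `F_q(T)`. -/
def IsAlgElem (α : L Fq) : Prop := ∃ P, IsMinPolyOf Fq P α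

open Classical in
/-- The minimal polynomial of an algebraic element (junk value `0` otherwise). -/
def minPolyPrim (α : L Fq) : Polynomial (Polynomial Fq) :=
  if h : IsAlgElem Fq α then h.choose else 0

/-- Degree of an algebraic element. -/
def degAlg (α : L Fq) : ℕ := (minPolyPrim Fq α).natDegree

/-- Height of an algebraic element. -/
def heightAlg (α : L Fq) : ℝ := Hpoly Fq (minPolyPrim Fq α)

/-- Inseparable degree of a polynomial `P ∈ (F_q[T])[X]`: the largest power `f = p^j` of the
characteristic such that `P(X) = R(X^f)` for some `R`. -/
def insepDeg (P : Polynomial (Polynomial Fq)) : ℕ :=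
  (ringChar Fq) ^ sSup {j : ℕ | ∃ R : Polynomial (Polynomial Fq),
    P = R.comp (Polynomial.X ^ (ringChar Fq) ^ j)}

/-- Inseparable degree of an algebraic element. -/
def insepAlg (α : L Fq) : ℕ := insepDeg Fq (minPolyPrim Fq α)

/-- `α'` is the Galois conjugate of the quadratic element `α` (equal to `α` itself in the
inseparable case): the minimal polynomial of `α` factors as `A(X - α)(X - α')`. -/
def IsConjOf (α' α : L Fq) : Prop :=
  (minPolyPrim Fq α).natDegree = 2 ∧
  (minPolyPrim Fq α).map (φ Fq) =
    Polynomial.C (φ Fq (minPolyPrim Fq α).leadingCoeff) *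
      (Polynomial.X - Polynomial.C α) * (Polynomial.X - Polynomial.C α')

/-- `v` is an absolute value on the algebraic closure of `F_q((T⁻¹))` extending `kabs`
(such an extension exists and is unique). -/
structure IsAbsExt (v : L Fq → ℝ) : Prop where
  eq_zero_iff : ∀ x, v x = 0 ↔ x = 0
  map_mul : ∀ x y, v (x * y) = v x * v y
  add_le : ∀ x y, v (x + y) ≤ max (v x) (v y)
  nonneg : ∀ x, 0 ≤ v x
  extends_kabs : ∀ f : K Fq, v (toL Fq f) = kabs Fq f

/-- The exponent `w_n(ξ)`: the supremum of the real numbers `w` such that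
`0 < |P(ξ)| ≤ H(P)^{-w}` for infinitely many `P ∈ (F_q[T])[X]` of degree at most `n`. -/
def wExp (n : ℕ) (ξ : K Fq) : EReal :=
  sSup {x : EReal | ∃ w : ℝ, x = (w : EReal) ∧
    {P : Polynomial (Polynomial Fq) | P.natDegree ≤ n ∧ 0 < kabs Fq (evalK Fq P ξ) ∧
      kabs Fq (evalK Fq P ξ) ≤ Hpoly Fq P ^ (-w)}.Infinite}

/-- The exponent `w_n^*(ξ)`: the supremum of the real numbers `w` such that
`0 < |ξ - α| ≤ H(α)^{-w-1}` for infinitely many algebraic `α` of degree at most `n`. -/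
def wStarExp (v : L Fq → ℝ) (n : ℕ) (ξ : K Fq) : EReal :=
  sSup {x : EReal | ∃ w : ℝ, x = (w : EReal) ∧
    {α : L Fq | IsAlgElem Fq α ∧ degAlg Fq α ≤ n ∧ 0 < v (toL Fq ξ - α) ∧
      v (toL Fq ξ - α) ≤ heightAlg Fq α ^ (-w - 1)}.Infinite}

/-- `pSeq a n = p_{n-1}`, the numerators of the convergents of `[a 0; a 1, a 2, …]`
(with `p_{-1} = 1`). -/
def pSeq (a : ℕ → Polynomial Fq) : ℕ → Polynomial Fq
  | 0 => 1
  | 1 => a 0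
  | (n+2) => a (n+1) * pSeq a (n+1) + pSeq a n

/-- `qSeq a n = q_{n-1}`, the denominators of the convergents of `[a 0; a 1, a 2, …]`
(with `q_{-1} = 0`). -/
def qSeq (a : ℕ → Polynomial Fq) : ℕ → Polynomial Fq
  | 0 => 0
  | 1 => 1
  | (n+2) => a (n+1) * qSeq a (n+1) + qSeq a n

/-- `ξ` has continued fraction expansion `[a 0; a 1, a 2, …]`: each partial quotient `a n`
(`n ≥ 1`) has degree at least one and `|ξ - p_n/q_n| = |q_n|⁻¹|q_{n+1}|⁻¹` for all `n ≥ 0`. -/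
def IsCFOf (ξ : K Fq) (a : ℕ → Polynomial Fq) : Prop :=
  (∀ n, 1 ≤ n → 1 ≤ (a n).natDegree) ∧
  ∀ n : ℕ,
    kabs Fq (ξ - polyToK Fq (pSeq Fq a (n+1)) / polyToK Fq (qSeq Fq a (n+1))) =
      (kabs Fq (polyToK Fq (qSeq Fq a (n+1))) * kabs Fq (polyToK Fq (qSeq Fq a (n+2))))⁻¹

/-- The sequence of partial quotients of `[0; b 0, b 1, b 2, …]`. -/
def cfA (b : ℕ → Polynomial Fq) : ℕ → Polynomial Fq := fun n => if n = 0 then 0 else b (n - 1)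

/-- `qden b n` is the denominator `q_n` of the `n`-th convergent of `[0; b 0, b 1, …]`. -/
def qden (b : ℕ → Polynomial Fq) (n : ℕ) : Polynomial Fq := qSeq Fq (cfA Fq b) (n + 1)

/-- `V^w` for a finite word `V` and a real `w ≥ 0`: `⌊w⌋` copies of `V` followed by the prefix
of `V` of length `⌈(w - ⌊w⌋)|V|⌉`. -/
def wordPow {A : Type*} (V : List A) (w : ℝ) : List A :=
  (List.replicate ⌊w⌋₊ V).flatten ++ V.take ⌈(w - ⌊w⌋₊) * V.length⌉₊

/-- The finite word `l` is a prefix of the infinite word `b`. -/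
def IsPrefixOfSeq {A : Type*} (l : List A) (b : ℕ → A) : Prop :=
  ∀ (i : ℕ) (h : i < l.length), l.get ⟨i, h⟩ = b i

/-- Condition `(*)_ρ` for an infinite word. -/
def SatisfiesCond {A : Type*} (b : ℕ → A) (ρ : ℝ) : Prop :=
  ∃ (U V : ℕ → List A) (w : ℕ → ℝ),
    (∀ n, V n ≠ []) ∧ (∀ n, 0 ≤ w n) ∧
    (∀ n, IsPrefixOfSeq (U n ++ wordPow (V n) (w n)) b) ∧
    (∀ n, ρ * (((U n).length + (V n).length : ℕ) : ℝ) ≤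
      (((U n).length + (wordPow (V n) (w n)).length : ℕ) : ℝ)) ∧
    StrictMono fun n => (wordPow (V n) (w n)).length

/-- The Diophantine exponent of an infinite word: the supremum of the `ρ` such that the word
satisfies Condition `(*)_ρ`. -/
def dioExp {A : Type*} (b : ℕ → A) : EReal :=
  sSup {x : EReal | ∃ ρ : ℝ, x = (ρ : EReal) ∧ SatisfiesCond b ρ}

/-- The complexity function: the number of distinct blocks of `n` consecutive letters. -/
def complexity {A : Type*} (b : ℕ → A) (n : ℕ) : ℕ∞ :=
  {w : Fin n → A | ∃ i : ℕ, ∀ k : Fin n, w k = b (i + k)}.encard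

/-- The infinite word `b` is ultimately periodic. -/
def UltimatelyPeriodic {A : Type*} (b : ℕ → A) : Prop :=
  ∃ N T : ℕ, 0 < T ∧ ∀ n, N ≤ n → b (n + T) = b n



theorem gauss_aux {L : Type*} [Field L] (w : AbsoluteValue L ℝ) (hw : IsNonarchimedean w)
    (a : L) (s : Finset L) :
    w a * ∏ i ∈ s, max 1 (w i) ≤ (C a * ∏ i ∈ s, (X - C i)).gaussNorm w 1 := by
  have h1 : ∀ i : L, max 1 (w i) ≤ (X - C i).gaussNorm w 1 := by
    intro i
    apply max_le
    · have h := le_gaussNorm w (X - C i) zero_le_one 1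
      have e : (X - C i : L[X]).coeff 1 = 1 := by
        rw [Polynomial.coeff_sub]; simp [coeff_X, coeff_C]
      rw [e] at h
      simpa using h
    · have h := le_gaussNorm w (X - C i) zero_le_one 0
      have e : (X - C i : L[X]).coeff 0 = -i := by
        rw [Polynomial.coeff_sub]; simp [coeff_X, coeff_C]
      rw [e] at h
      simpa using h
  rw [gaussNorm_mul hw zero_lt_one, gaussNorm_C]
  refine mul_le_mul_of_nonneg_left ?_ (w.nonneg _)
  classical
  induction s using Finset.induction_on with
  | empty => 
    have := gaussNorm_C w 1 (1 : L)
    simpa using this.ge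
  | insert i s hi ih =>
    rw [Finset.prod_insert hi, Finset.prod_insert hi, gaussNorm_mul hw zero_lt_one]
    exact mul_le_mul (h1 i) ih (Finset.prod_nonneg fun i _ => by positivity) (gaussNorm_nonneg _ _ zero_le_one)

theorem offdiag_aux {L : Type*} [Field L] [DecidableEq L] (w : AbsoluteValue L ℝ) (hw : IsNonarchimedean w)
    (s : Finset L) (k l : L) (hk : k ∈ s) (hl : l ∈ s) (hkl : k ≠ l) :
    ∏ p ∈ s.offDiag, w (p.1 - p.2) ≤ (w (k - l) * (∏ i ∈ s, max 1 (w i)) ^ (s.card - 1)) ^ 2 := by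
  set M : L → ℝ := fun i => max 1 (w i) with hM
  have hM1 : ∀ i, 1 ≤ M i := fun i => le_max_left _ _
  have hM0 : ∀ i, 0 < M i := fun i => lt_of_lt_of_le one_pos (hM1 i)
  have hsub : ∀ i j, w (i - j) ≤ M i * M j := by
    intro i j
    have := hw i (-j)
    rw [w.map_neg, ← sub_eq_add_neg] at this
    refine this.trans (max_le ?_ ?_)
    · calc w i ≤ M i := le_max_right _ _
        _ ≤ M i * M j := le_mul_of_one_le_right (hM0 i).le (hM1 j)
    · calc w j ≤ M j := le_max_right _ _
        _ ≤ M i * M j := le_mul_of_one_le_left (hM0 j).le (hM1 i)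
  have hP1 : ∏ p ∈ s.offDiag, M p.1 = (∏ i ∈ s, M i) ^ (s.card - 1) := by
    rw [Finset.prod_finset_product (s := s) (t := fun i => s.erase i) (r := s.offDiag)]
    · rw [← Finset.prod_pow]
      refine Finset.prod_congr rfl fun i hi => ?_
      simp [Finset.card_erase_of_mem hi]
    · rintro ⟨a, b⟩
      simp [Finset.mem_offDiag]
      tauto
  have hP2 : ∏ p ∈ s.offDiag, M p.2 = (∏ i ∈ s, M i) ^ (s.card - 1) := by
    rw [← hP1]
    refine Finset.prod_bij (fun p _ => (p.2, p.1)) ?_ ?_ ?_ ?_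
    · rintro ⟨a, b⟩ h
      simp [Finset.mem_offDiag] at h ⊢
      tauto
    · rintro ⟨a, b⟩ h ⟨c, d⟩ h' e
      simp at e ⊢
      tauto
    · rintro ⟨a, b⟩ h
      refine ⟨(b, a), ?_, rfl⟩
      simp [Finset.mem_offDiag] at h ⊢
      tauto
    · rintro ⟨a, b⟩ h
      rfl
  have hq : ({(k, l), (l, k)} : Finset (L × L)) ⊆ s.offDiag := by
    intro p hp
    simp at hp
    rcases hp with rfl | rfl <;> simp [Finset.mem_offDiag, *]
    exact hkl.symm
  have hne : (k, l) ≠ (l, k) := by simp [hkl]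
  rw [← Finset.prod_sdiff hq, Finset.prod_pair hne]
  have e1 : ∏ p ∈ s.offDiag \ {(k, l), (l, k)}, w (p.1 - p.2) ≤ ∏ p ∈ s.offDiag, (M p.1 * M p.2) := by
    rw [← Finset.prod_sdiff hq]
    have : (1 : ℝ) ≤ ∏ p ∈ ({(k, l), (l, k)} : Finset (L × L)), (M p.1 * M p.2) := by
      rw [Finset.prod_pair hne]
      have := one_le_mul_of_one_le_of_one_le (hM1 k) (hM1 l)
      have h2 := one_le_mul_of_one_le_of_one_le (hM1 l) (hM1 k)
      exact one_le_mul_of_one_le_of_one_le this h2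
    have h3 : ∏ p ∈ s.offDiag \ {(k, l), (l, k)}, w (p.1 - p.2) ≤
        ∏ p ∈ s.offDiag \ {(k, l), (l, k)}, (M p.1 * M p.2) :=
      Finset.prod_le_prod (fun _ _ => w.nonneg _) (fun _ _ => hsub _ _)
    exact h3.trans (le_mul_of_one_le_right (Finset.prod_nonneg fun p _ => (mul_pos (hM0 _) (hM0 _)).le) this)
  rw [Finset.prod_mul_distrib, hP1, hP2] at e1
  have hs : w (l - k) = w (k - l) := w.map_sub _ _
  simp only [hs]
  calc _ ≤ ((∏ i ∈ s, M i) ^ (s.card - 1) * (∏ i ∈ s, M i) ^ (s.card - 1)) * (w (k - l) * w (k - l)) := by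
        gcongr
    _ = _ := by ring

theorem main_aux {A L : Type*} [CommRing A] [IsDomain A] [Field L] [IsAlgClosed L]
    (ψ : A →+* L) (hψ : Function.Injective ψ)
    (w : AbsoluteValue L ℝ) (hw : IsNonarchimedean w) (hA : ∀ x : A, x ≠ 0 → 1 ≤ w (ψ x))
    (R : A[X]) (hR : 0 < R.natDegree) (hsep : (R.map ψ).Separable) (H : ℝ)
    (hH : ∀ i, w (ψ (R.coeff i)) ≤ H) (γ δ : L) (hne : γ ≠ δ)
    (hγ : (R.map ψ).eval γ = 0) (hδ : (R.map ψ).eval δ = 0) :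
    1 ≤ w (γ - δ) * H ^ (R.natDegree - 1) := by
  classical
  set Q := R.map ψ with hQ
  have hR0 : R ≠ 0 := by rintro rfl; simp at hR
  have hQ0 : Q ≠ 0 := hsep.ne_zero
  set s := Q.roots.toFinset with hs
  set a := Q.leadingCoeff with ha
  have ha' : a = ψ R.leadingCoeff := leadingCoeff_map_of_injective hψ ..
  have hnd : Q.natDegree = R.natDegree := natDegree_map_eq_of_injective hψ ..
  have ha0 : a ≠ 0 := by simpa [ha] using hQ0
  have hfac : Q = C a * ∏ i ∈ s, (X - C i) := by
    have h1 := (IsAlgClosed.splits Q).eq_prod_roots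
    have h2 : ∏ i ∈ s, (X - C i) = (Q.roots.map fun i => X - C i).prod := by
      rw [Finset.prod, hs, Multiset.toFinset_val, (nodup_roots hsep).dedup]
    rw [h2]; exact h1
  have hcard : s.card = R.natDegree := by
    rw [← hnd, (IsAlgClosed.splits Q).natDegree_eq_card_roots, hs, Multiset.toFinset_card_of_nodup (nodup_roots hsep)]
  have hroot : ∀ x, Q.eval x = 0 → x ∈ s := by
    intro x hx; simp [hs, hQ0]; exact hx
  -- height
  have hW : w a * ∏ i ∈ s, max 1 (w i) ≤ H := by
    have := gauss_aux w hw a s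
    rw [← hfac] at this
    obtain ⟨i, hi⟩ := exists_eq_gaussNorm w 1 Q
    rw [hi] at this
    refine this.trans ?_
    simpa [hQ] using hH i
  -- derivative at roots
  have hder : ∀ i ∈ s, Q.derivative.eval i = a * ∏ j ∈ s.erase i, (i - j) := by
    intro i hi
    conv_lhs => rw [hfac, ← Finset.mul_prod_erase _ _ hi]
    simp [eval_prod]
  have hres : resultant Q Q.derivative Q.natDegree (Q.natDegree - 1) =
      a ^ (Q.natDegree - 1) * ∏ i ∈ s, Q.derivative.eval i := by
    have hd : Q.derivative.natDegree ≤ Q.natDegree - 1 := natDegree_derivative_le Q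
    rw [resultant_eq_prod_eval _ _ _ hd (IsAlgClosed.splits Q), Finset.prod, hs,
      Multiset.toFinset_val, (nodup_roots hsep).dedup]
  have hprod : ∏ i ∈ s, Q.derivative.eval i = a ^ R.natDegree * ∏ p ∈ s.offDiag, (p.1 - p.2) := by
    rw [Finset.prod_congr rfl hder, Finset.prod_mul_distrib, Finset.prod_const, hcard]
    congr 1
    rw [Finset.prod_finset_product (s := s) (t := fun i => s.erase i) (r := s.offDiag)]
    rintro ⟨a, b⟩
    simp [Finset.mem_offDiag]
    tauto
  have hdisc := congrArg ψ (resultant_deriv (f := R) (natDegree_pos_iff_degree_pos.mp hR))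
  rw [← resultant_map_map, ← derivative_map, ← hQ, ← hnd, hres, hprod] at hdisc
  simp only [map_mul, ← ha', map_pow, map_neg, map_one] at hdisc
  have hoff0 : ∏ p ∈ s.offDiag, (p.1 - p.2) ≠ 0 := by
    rw [Finset.prod_ne_zero_iff]
    rintro ⟨x, y⟩ h
    simp [Finset.mem_offDiag, sub_eq_zero] at h ⊢
    tauto
  have hd0 : R.discr ≠ 0 := by
    intro h
    rw [h] at hdisc
    simp at hdisc
    exact hdisc.elim (fun h => ha0 h.1) (fun h => h.elim (fun h => ha0 h.1) (fun h => hoff0 h))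
  have hv := congrArg w hdisc
  simp only [map_mul, map_pow, w.map_neg, map_one, one_pow, one_mul, map_prod] at hv
  have h1 := hA _ hd0
  have ha1 : 0 < w a := w.pos ha0
  have h2 := offdiag_aux w hw s γ δ (hroot _ hγ) (hroot _ hδ) hne
  rw [hcard] at h2
  rw [hnd] at hv
  obtain ⟨m, hm⟩ : ∃ m, R.natDegree = m + 1 := ⟨R.natDegree - 1, by omega⟩
  rw [hm] at hv h2 ⊢
  simp only [Nat.add_sub_cancel] at hv h2 ⊢
  set S := ∏ p ∈ s.offDiag, w (p.1 - p.2)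
  have h3 : w a ^ m * w a ^ m * S = w (ψ R.discr) := by
    have : w a * (w a ^ m * w a ^ m * S) = w a * w (ψ R.discr) := by rw [← hv]; ring
    exact mul_left_cancel₀ ha1.ne' this
  have h4 : 1 ≤ (w (γ - δ) * (w a * ∏ i ∈ s, max 1 (w i)) ^ m) ^ 2 := by
    calc 1 ≤ w a ^ m * w a ^ m * S := by rw [h3]; exact h1
      _ ≤ w a ^ m * w a ^ m * (w (γ - δ) * (∏ i ∈ s, max 1 (w i)) ^ m) ^ 2 := by gcongr
      _ = _ := by ring
  have hpn : 0 ≤ ∏ i ∈ s, max 1 (w i) := Finset.prod_nonneg fun i _ => by positivity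
  have h5 : 1 ≤ w (γ - δ) * (w a * ∏ i ∈ s, max 1 (w i)) ^ m := by
    by_contra hcon
    push Not at hcon
    have : (w (γ - δ) * (w a * ∏ i ∈ s, max 1 (w i)) ^ m) ^ 2 < 1 :=
      pow_lt_one₀ (by positivity) hcon two_ne_zero
    linarith
  exact h5.trans (by gcongr)

theorem polyToK_coeff (x : Polynomial Fq) (n : ℕ) : (polyToK Fq x).coeff (-(n : ℤ)) = x.coeff n := by
  induction x using Polynomial.induction_on' with
  | add p q hp hq => simp [hp, hq]
  | monomial m a =>
    have : polyToK Fq (monomial m a) = HahnSeries.single (-(m : ℤ)) a := by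
      simp [polyToK, TT, eval₂_monomial, HahnSeries.C_apply, HahnSeries.single_pow]
    rw [this, HahnSeries.coeff_single, coeff_monomial]
    simp [eq_comm]

theorem polyToK_inj : Function.Injective (polyToK Fq) := by
  rw [injective_iff_map_eq_zero]
  intro x hx
  ext n
  rw [← polyToK_coeff, hx]; simp

theorem one_le_kabs (x : Polynomial Fq) (hx : x ≠ 0) : 1 ≤ kabs Fq (polyToK Fq x) := by
  have h0 : polyToK Fq x ≠ 0 := fun h => hx (polyToK_inj Fq (by simpa using h))
  have h1 : (polyToK Fq x).order ≤ -(x.natDegree : ℤ) := by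
    apply HahnSeries.order_le_of_coeff_ne_zero
    rw [polyToK_coeff]
    simpa using hx
  rw [kabs, if_neg h0]
  apply one_le_zpow₀
  · exact_mod_cast Fintype.card_pos
  · omega

theorem bdd_kabs (P : Polynomial (Polynomial Fq)) :
    BddAbove (Set.range fun i : ℕ => kabs Fq (polyToK Fq (P.coeff i))) := by
  have : (Set.range fun i : ℕ => kabs Fq (polyToK Fq (P.coeff i))) ⊆
      (fun x => kabs Fq (polyToK Fq x)) '' (Set.range P.coeff) := by
    rintro _ ⟨i, rfl⟩
    exact ⟨_, ⟨i, rfl⟩, rfl⟩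
  refine ((Set.Finite.image _ ?_).subset this).bddAbove
  have h : Set.range P.coeff ⊆ insert 0 (P.coeff '' (P.support : Set ℕ)) := by
    rintro _ ⟨i, rfl⟩
    by_cases hi : P.coeff i = 0
    · left; exact hi
    · right; exact ⟨i, by simpa using hi, rfl⟩
  exact (((Finset.finite_toSet _).image _).insert _).subset h

/-- The absolute value as a bundled object. -/
def absOf (v : L Fq → ℝ) (hv : IsAbsExt Fq v) : AbsoluteValue (L Fq) ℝ where
  toFun := v
  map_mul' := hv.map_mul
  nonneg' := hv.nonneg
  eq_zero' := hv.eq_zero_iff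
  add_le' x y := (hv.add_le x y).trans
    (max_le_add_of_nonneg (hv.nonneg x) (hv.nonneg y))

theorem φ_inj : Function.Injective (φ Fq) :=
  (RingHom.injective (toL Fq)).comp (polyToK_inj Fq)

theorem sep_aux {A E : Type*} [CommRing A] [IsDomain A] [UniqueFactorizationMonoid A] [Field E] (ψ : A →+* E)
    (hψ : Function.Injective ψ) (R : A[X]) (hR : Irreducible R) (hd : R.natDegree ≠ 0)
    (hder : derivative R ≠ 0) : (R.map ψ).Separable := by
  have hp := hR.isPrimitive hd
  letI := Classical.choice (inferInstance : Nonempty (NormalizedGCDMonoid A))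
  have hi := (hp.irreducible_iff_irreducible_map_fraction_map (K := FractionRing A)).1 hR
  have hs : (R.map (algebraMap A (FractionRing A))).Separable := by
    rw [separable_iff_derivative_ne_zero hi, derivative_map]
    rw [Ne, Polynomial.map_eq_zero_iff (IsFractionRing.injective A (FractionRing A))]
    exact hder
  have h2 := hs.map (f := IsFractionRing.lift (K := FractionRing A) hψ)
  rw [Polynomial.map_map] at h2
  convert! h2 using 2
  ext x
  simp

theorem exists_sep (P : Polynomial (Polynomial Fq)) (hirr : Irreducible P)
    (hdeg : 2 ≤ P.natDegree) : ∃ (j : ℕ) (R : Polynomial (Polynomial Fq)),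
      insepDeg Fq P = ringChar Fq ^ j ∧ P = expand _ (ringChar Fq ^ j) R ∧ Irreducible R ∧
      derivative R ≠ 0 := by
  have hp : (ringChar Fq).Prime := CharP.char_is_prime Fq (ringChar Fq)
  set p := ringChar Fq with hpdef
  set S := {j : ℕ | ∃ R : Polynomial (Polynomial Fq), P = R.comp (Polynomial.X ^ p ^ j)} with hS
  have hne : S.Nonempty := ⟨0, P, by simp⟩
  have hbdd : BddAbove S := by
    refine ⟨P.natDegree, ?_⟩
    rintro j ⟨R, hR⟩
    have h1 : P.natDegree = R.natDegree * p ^ j := by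
      conv_lhs => rw [hR]
      rw [natDegree_comp, natDegree_X_pow]
    have h2 : R.natDegree ≠ 0 := by
      intro h; rw [h] at h1; omega
    have h3 : j < p ^ j := Nat.lt_pow_self hp.one_lt
    nlinarith [Nat.pos_of_ne_zero h2]
  obtain ⟨R, hR⟩ := Nat.sSup_mem hne hbdd
  refine ⟨sSup S, R, rfl, ?_, ?_, ?_⟩
  · rw [expand_eq_comp_X_pow]; exact hR
  · rw [← expand_eq_comp_X_pow] at hR
    rw [hR] at hirr
    exact of_irreducible_expand (pow_ne_zero _ hp.ne_zero) hirr
  · intro hder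
    haveI : CharP (Polynomial Fq) p := inferInstance
    have hc := expand_contract p hder hp.ne_zero
    have : sSup S + 1 ∈ S := by
      refine ⟨contract p R, ?_⟩
      rw [← expand_eq_comp_X_pow, pow_succ, expand_mul, hc, expand_eq_comp_X_pow]
      exact hR
    have := le_csSup hbdd this
    omega

theorem stmt7 (Fq : Type) [Field Fq] [Fintype Fq]
    (v : L Fq → ℝ) (hv : IsAbsExt Fq v)
    (P : Polynomial (Polynomial Fq)) (hirr : Irreducible P) (hdeg : 2 ≤ P.natDegree)
    (α β : L Fq) (hne : α ≠ β)
    (hα : evalL Fq P α = 0) (hβ : evalL Fq P β = 0) :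
    Hpoly Fq P ^ (-(P.natDegree : ℝ) / (insepDeg Fq P : ℝ) ^ 2 + 1 / (insepDeg Fq P : ℝ)) ≤
      v (α - β) := by
  obtain ⟨j, R, hins, hPR, hRi, hRd⟩ := exists_sep Fq P hirr hdeg
  have hp : (ringChar Fq).Prime := CharP.char_is_prime Fq (ringChar Fq)
  rw [hins]
  set p := ringChar Fq with hpdef
  haveI : Fact p.Prime := ⟨hp⟩
  haveI : CharP (L Fq) p :=
    charP_of_injective_ringHom (f := (toL Fq).comp (HahnSeries.C : Fq →+* K Fq))
      (RingHom.injective _) p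
  set f := p ^ j with hf
  have hf0 : 0 < f := pow_pos hp.pos j
  have hn : P.natDegree = R.natDegree * f := by
    conv_lhs => rw [hPR]
    rw [natDegree_expand]
  have hRn : R.natDegree ≠ 0 := by
    intro h; rw [h] at hn; omega
  have hsep := sep_aux (φ Fq) (φ_inj Fq) R hRi hRn hRd
  have hev : ∀ x : L Fq, evalL Fq P x = 0 → (R.map (φ Fq)).eval (x ^ f) = 0 := by
    intro x hx
    rw [evalL, hPR, ← eval_map, map_expand, expand_eval] at hx
    exact hx
  have hsub : (α - β) ^ f = α ^ f - β ^ f := sub_pow_char_pow ..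
  have hne' : α ^ f ≠ β ^ f := by
    intro h
    have : (α - β) ^ f = 0 := by rw [hsub, h, sub_self]
    exact hne (sub_eq_zero.1 (pow_eq_zero_iff hf0.ne' |>.1 this))
  have hHi : ∀ i, kabs Fq (polyToK Fq (P.coeff i)) ≤ Hpoly Fq P := fun i => le_ciSup (bdd_kabs Fq P) i
  have key := main_aux (φ Fq) (φ_inj Fq) (absOf Fq v hv) (fun x y => hv.add_le x y)
    (fun x hx => by
      change 1 ≤ v (toL Fq (polyToK Fq x))
      rw [hv.extends_kabs]; exact one_le_kabs Fq x hx)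
    R (Nat.pos_of_ne_zero hRn) hsep (Hpoly Fq P)
    (fun i => by
      change v (toL Fq (polyToK Fq (R.coeff i))) ≤ _
      rw [hv.extends_kabs]
      have := hHi (i * f)
      rw [hPR, coeff_expand_mul hf0, ← hPR] at this
      exact this)
    (α ^ f) (β ^ f) hne' (hev α hα) (hev β hβ)
  have hH1 : 1 ≤ Hpoly Fq P :=
    (one_le_kabs Fq _ (leadingCoeff_ne_zero.2 hirr.ne_zero)).trans (hHi P.natDegree)
  rw [← hsub, map_pow] at key
  change 1 ≤ v (α - β) ^ f * _ at key
  set H := Hpoly Fq P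
  set d := v (α - β) with hd
  have hd0 : 0 ≤ d := hv.nonneg _
  have hH0 : 0 < H := by linarith
  have hfr : (0 : ℝ) < f := by exact_mod_cast hf0
  have hexp : -(P.natDegree : ℝ) / (f : ℝ) ^ 2 + 1 / (f : ℝ) =
      (-((R.natDegree - 1 : ℕ) : ℝ)) * (1 / (f : ℝ)) := by
    rw [hn, Nat.cast_sub (by omega)]
    push_cast
    field_simp
    ring
  have hle : H ^ (-((R.natDegree - 1 : ℕ) : ℝ)) ≤ d ^ f := by
    rw [Real.rpow_neg hH0.le, Real.rpow_natCast]
    rw [inv_le_iff_one_le_mul₀ (by positivity)]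
    exact key
  rw [hexp, Real.rpow_mul hH0.le]
  calc _ ≤ (d ^ f) ^ (1 / (f : ℝ)) := by gcongr
    _ = d := by rw [one_div, Real.pow_rpow_inv_natCast hd0 hf0.ne']


end Ooto
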